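/- Let A(λ) = I + B/(λ+1) + C/(λ-1) with B = [[0, -2π e^{2i(x-t)}/(1+e^{4ix})],[0, -2e^{4ix}/(1+e^{4ix})]] and C = [[2e^{4ix}/(1+e^{4ix}), 0],[-(2/π) e^{2i(x+t)}/(1+e^{4ix}), 0]]. Then the matrix function M(λ) defined as A(λ)·[[1, -((λ-1)/(λ+1))π e^{2i(x-t)}],[0,1]] for λ near -1, A(λ)·[[1,0],[((λ+1)/(π(λ-1))) e^{2i(x+t)},1]] for λ near 1, and A(λ) elsewhere, is analytic at λ = -1 and at λ = 1 (i.e., the apparent singularities cancel). -/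

import Mathlib

open Complex Matrix Filter

/-- The residue matrix `B` at `λ = -1`. -/
noncomputable def Bmat (x t : ℝ) : Matrix (Fin 2) (Fin 2) ℂ :=
  !![0, -2 * (Real.pi : ℂ) * Complex.exp (2 * I * ((x : ℂ) - t)) / (1 + Complex.exp (4 * I * x));
     0, -2 * Complex.exp (4 * I * x) / (1 + Complex.exp (4 * I * x))]

/-- The residue matrix `C` at `λ = 1`. -/
noncomputable def Cmat (x t : ℝ) : Matrix (Fin 2) (Fin 2) ℂ :=
  !![2 * Complex.exp (4 * I * x) / (1 + Complex.exp (4 * I * x)), 0;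
     -(2 / (Real.pi : ℂ)) * Complex.exp (2 * I * ((x : ℂ) + t)) / (1 + Complex.exp (4 * I * x)), 0]

/-- `A(λ) = I + B/(λ+1) + C/(λ-1)`. -/
noncomputable def Amat (x t : ℝ) (lam : ℂ) : Matrix (Fin 2) (Fin 2) ℂ :=
  1 + (lam + 1)⁻¹ • Bmat x t + (lam - 1)⁻¹ • Cmat x t

/-- The off-diagonal jump coefficients multiply to `e^{4ix}`. -/
lemma exp_sub_mul_exp_add (x t : ℂ) :
    Complex.exp (2 * I * (x - t)) * Complex.exp (2 * I * (x + t)) = Complex.exp (4 * I * x) := by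
  rw [← Complex.exp_add]
  ring_nf

lemma Amat_eq (x t : ℝ) (lam : ℂ) :
    Amat x t lam =
      !![1 + (lam - 1)⁻¹ * (2 * Complex.exp (4 * I * x) / (1 + Complex.exp (4 * I * x))),
         (lam + 1)⁻¹ * (-2 * (Real.pi : ℂ) * Complex.exp (2 * I * ((x : ℂ) - t)) /
           (1 + Complex.exp (4 * I * x)));
         (lam - 1)⁻¹ * (-(2 / (Real.pi : ℂ)) * Complex.exp (2 * I * ((x : ℂ) + t)) /
           (1 + Complex.exp (4 * I * x))),
         1 + (lam + 1)⁻¹ * (-2 * Complex.exp (4 * I * x) / (1 + Complex.exp (4 * I * x)))] := by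
  ext i j
  fin_cases i <;> fin_cases j <;> simp [Amat, Bmat, Cmat]

/-- The upper triangular factor replaces the second column of `A` by a
constant. -/
lemma Amat_mul_upper (x t : ℝ) (h : 1 + Complex.exp (4 * I * (x : ℂ)) ≠ 0) {lam : ℂ}
    (h₁ : lam + 1 ≠ 0) (h₂ : lam - 1 ≠ 0) :
    Amat x t lam *
        !![1, -((lam - 1) / (lam + 1)) * (Real.pi : ℂ) * Complex.exp (2 * I * ((x : ℂ) - t));
           0, 1] =
      !![Amat x t lam 0 0, -(Real.pi : ℂ) * Complex.exp (2 * I * ((x : ℂ) - t));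
         Amat x t lam 1 0, 1] := by
  have hpi : (Real.pi : ℂ) ≠ 0 := by exact_mod_cast Real.pi_ne_zero
  have hE := exp_sub_mul_exp_add x t
  rw [Amat_eq]
  generalize Complex.exp (4 * I * x) = E at *
  generalize Complex.exp (2 * I * ((x : ℂ) - t)) = p at *
  generalize Complex.exp (2 * I * ((x : ℂ) + t)) = q at *
  subst hE
  ext i j
  fin_cases i <;> fin_cases j <;> simp [Matrix.mul_apply, Fin.sum_univ_two] <;> field_simp <;> ring

/-- The lower triangular factor replaces the first column of `A` by a constant. -/
lemma Amat_mul_lower (x t : ℝ) (h : 1 + Complex.exp (4 * I * (x : ℂ)) ≠ 0) {lam : ℂ}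
    (h₁ : lam + 1 ≠ 0) (h₂ : lam - 1 ≠ 0) :
    Amat x t lam *
        !![1, 0;
           ((lam + 1) / ((Real.pi : ℂ) * (lam - 1))) * Complex.exp (2 * I * ((x : ℂ) + t)), 1] =
      !![1, Amat x t lam 0 1;
         Complex.exp (2 * I * ((x : ℂ) + t)) / (Real.pi : ℂ), Amat x t lam 1 1] := by
  have hpi : (Real.pi : ℂ) ≠ 0 := by exact_mod_cast Real.pi_ne_zero
  have hE := exp_sub_mul_exp_add x t
  rw [Amat_eq]
  generalize Complex.exp (4 * I * x) = E at *
  generalize Complex.exp (2 * I * ((x : ℂ) - t)) = p at *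
  generalize Complex.exp (2 * I * ((x : ℂ) + t)) = q at *
  subst hE
  have h' : 1 + q * p ≠ 0 := by rwa [mul_comm q p]
  ext i j
  fin_cases i <;> fin_cases j <;> simp [Matrix.mul_apply, Fin.sum_univ_two] <;> field_simp <;> ring

/-- Column `0` of `A` is regular away from `1`. -/
lemma analyticAt_Amat_col_zero (x t : ℝ) (i : Fin 2) {z : ℂ} (hz : z - 1 ≠ 0) :
    AnalyticAt ℂ (fun lam => Amat x t lam i 0) z := by
  have hinv : AnalyticAt ℂ (fun lam : ℂ => (lam - 1)⁻¹) z :=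
    (analyticAt_id.sub analyticAt_const).inv hz
  simp only [Amat_eq]
  fin_cases i
  · exact analyticAt_const.add (hinv.mul analyticAt_const)
  · exact hinv.mul analyticAt_const

/-- Column `1` of `A` is regular away from `-1`. -/
lemma analyticAt_Amat_col_one (x t : ℝ) (i : Fin 2) {z : ℂ} (hz : z + 1 ≠ 0) :
    AnalyticAt ℂ (fun lam => Amat x t lam i 1) z := by
  have hinv : AnalyticAt ℂ (fun lam : ℂ => (lam + 1)⁻¹) z :=
    (analyticAt_id.add analyticAt_const).inv hz
  simp only [Amat_eq]
  fin_cases i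
  · exact hinv.mul analyticAt_const
  · exact analyticAt_const.add (hinv.mul analyticAt_const)

/-- The apparent singularities of `M(λ)` at `λ = ∓1` cancel: near `-1` (resp. `1`),
`A(λ)` times the corresponding triangular jump factor agrees on a punctured
neighbourhood with a function analytic there. -/
theorem stmt_4 (x t : ℝ) (h : 1 + Complex.exp (4 * I * (x : ℂ)) ≠ 0) :
    (∃ g : ℂ → Matrix (Fin 2) (Fin 2) ℂ,
      (∀ i j, AnalyticAt ℂ (fun z => g z i j) (-1)) ∧
      ∀ᶠ lam in nhdsWithin (-1 : ℂ) {(-1 : ℂ)}ᶜ,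
        g lam = Amat x t lam *
          !![1, -((lam - 1) / (lam + 1)) * (Real.pi : ℂ) * Complex.exp (2 * I * ((x : ℂ) - t));
             0, 1]) ∧
    (∃ g : ℂ → Matrix (Fin 2) (Fin 2) ℂ,
      (∀ i j, AnalyticAt ℂ (fun z => g z i j) 1) ∧
      ∀ᶠ lam in nhdsWithin (1 : ℂ) {(1 : ℂ)}ᶜ,
        g lam = Amat x t lam *
          !![1, 0;
             ((lam + 1) / ((Real.pi : ℂ) * (lam - 1))) * Complex.exp (2 * I * ((x : ℂ) + t)), 1]) := by
  constructor
  · refine ⟨fun lam => !![Amat x t lam 0 0, -(Real.pi : ℂ) * Complex.exp (2 * I * ((x : ℂ) - t));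
      Amat x t lam 1 0, 1], fun i j => ?_, ?_⟩
    · have hz : (-1 : ℂ) - 1 ≠ 0 := by norm_num
      fin_cases i <;> fin_cases j
      · exact analyticAt_Amat_col_zero x t 0 hz
      · exact analyticAt_const
      · exact analyticAt_Amat_col_zero x t 1 hz
      · exact analyticAt_const
    · have hne : ∀ᶠ lam in nhdsWithin (-1 : ℂ) {(-1 : ℂ)}ᶜ, lam ≠ 1 :=
        nhdsWithin_le_nhds (eventually_ne_nhds (by norm_num))
      filter_upwards [hne, self_mem_nhdsWithin] with lam h₁ h₂
      exact (Amat_mul_upper x t h (fun h₀ => h₂ (eq_neg_of_add_eq_zero_left h₀))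
        (sub_ne_zero.2 h₁)).symm
  · refine ⟨fun lam => !![1, Amat x t lam 0 1;
      Complex.exp (2 * I * ((x : ℂ) + t)) / (Real.pi : ℂ), Amat x t lam 1 1], fun i j => ?_, ?_⟩
    · have hz : (1 : ℂ) + 1 ≠ 0 := by norm_num
      fin_cases i <;> fin_cases j
      · exact analyticAt_const
      · exact analyticAt_Amat_col_one x t 0 hz
      · exact analyticAt_const
      · exact analyticAt_Amat_col_one x t 1 hz
    · have hne : ∀ᶠ lam in nhdsWithin (1 : ℂ) {(1 : ℂ)}ᶜ, lam ≠ -1 :=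
        nhdsWithin_le_nhds (eventually_ne_nhds (by norm_num))
      filter_upwards [hne, self_mem_nhdsWithin] with lam h₁ h₂
      exact (Amat_mul_lower x t h (fun h₀ => h₁ (eq_neg_of_add_eq_zero_left h₀))
        (sub_ne_zero.2 h₂)).symm
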